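/- Let d ≥ 1, 1 ≤ p < ∞, m ∈ ℤ_{≥0} with m > d/p, δ ∈ ℝ, and let k ∈ ℤ_{≥0} with k < m − d/p. There exists a constant C > 0 (depending on d, m, p, k, δ) such that for every f ∈ C_c^∞(ℝ^d) and every multi-index α with |α| ≤ k, sup_{x ∈ ℝ^d} ⟨x⟩^δ |∂^α f(x)| ≤ C · ‖f‖_{H^{m,p}_δ}. -/

import Mathlib

open MeasureTheory

/-- The Japanese bracket `⟨x⟩ = √(1 + |x|²)`. -/
noncomputable def jb {d : ℕ} (x : EuclideanSpace ℝ (Fin d)) : ℝ := Real.sqrt (1 + ‖x‖ ^ 2)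

/-- Partial derivative in the `i`-th coordinate direction. -/
noncomputable def pderiv' {d : ℕ} {F : Type*} [NormedAddCommGroup F] [NormedSpace ℝ F]
    (i : Fin d) (f : EuclideanSpace ℝ (Fin d) → F) : EuclideanSpace ℝ (Fin d) → F :=
  fun x => fderiv ℝ f x (EuclideanSpace.single i 1)

/-- Multi-index derivative `∂^α f`. -/
noncomputable def mderiv {d : ℕ} {F : Type*} [NormedAddCommGroup F] [NormedSpace ℝ F]
    (α : Fin d → ℕ) (f : EuclideanSpace ℝ (Fin d) → F) : EuclideanSpace ℝ (Fin d) → F :=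
  (List.finRange d).foldr (fun i g => (pderiv' i)^[α i] g) f

/-- Weighted `L^p` norm `‖⟨x⟩^δ f‖_{L^p}`. -/
noncomputable def wLp {d : ℕ} {F : Type*} [NormedAddCommGroup F] [NormedSpace ℝ F]
    (p δ : ℝ) (f : EuclideanSpace ℝ (Fin d) → F) : ℝ :=
  (eLpNorm (fun x => jb x ^ δ • f x) (ENNReal.ofReal p) volume).toReal

/-- Weighted Sobolev norm `‖f‖_{H^{m,p}_δ} = Σ_{|α| ≤ m} ‖⟨x⟩^δ ∂^α f‖_{L^p}`. -/
noncomputable def Hnorm (d m : ℕ) {F : Type*} [NormedAddCommGroup F] [NormedSpace ℝ F]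
    (p δ : ℝ) (f : EuclideanSpace ℝ (Fin d) → F) : ℝ :=
  ∑ α ∈ Finset.univ.filter (fun α : Fin d → Fin (m + 1) => ∑ i, (α i : ℕ) ≤ m),
    wLp p δ (mderiv (fun i => (α i : ℕ)) f)

/-!
Taylor's formula with integral remainder, expanded at `x + z` and evaluated at `x`, bounds `‖u x‖`
by the derivatives of order `< l` at `x + z` and by `∫₀¹ r ^ (l - 1) ‖D^l u (x + r • z)‖ dr`.
Average this over the unit ball `‖z‖ < 1`. By the substitution `y = x + r • z` and Hölder's
inequality, the mean of `‖v (x + r • z)‖` is at most a constant times `r ^ (-d / p)` times the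
`L^p` norm of `v` on the ball of radius `1` about `x`, and `r ^ (l - 1 - d / p)` is integrable on
`(0, 1)` exactly when `d / p < l`. This is a Sobolev inequality on unit balls; it takes weights
because, by Peetre's inequality, `⟨x⟩ ^ δ` and `⟨y⟩ ^ δ` are comparable for `‖x - y‖ ≤ 1`. Apply it
to `∂^α f` with `l = m - k`.
-/

open scoped ENNReal

section Rescaling

variable {E : Type*} [NormedAddCommGroup E] [NormedSpace ℝ E] [FiniteDimensional ℝ E]
  [MeasurableSpace E] [BorelSpace E] (μ : Measure E) [μ.IsAddHaarMeasure]
  {F : Type*} [NormedAddCommGroup F]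

theorem map_add_smul_restrict_ball (x : E) {r : ℝ} (hr : 0 < r) :
    (μ.restrict (Metric.ball 0 1)).map (fun z ↦ x + r • z) =
      ENNReal.ofReal (r ^ Module.finrank ℝ E)⁻¹ • μ.restrict (Metric.ball x r) := by
  have hpre : (fun z : E ↦ x + r • z) ⁻¹' Metric.ball x r = Metric.ball 0 1 := by
    ext z
    simp [norm_smul, abs_of_pos hr, mul_lt_iff_lt_one_right hr]
  have hmap : μ.map (fun z ↦ x + r • z) = ENNReal.ofReal (r ^ Module.finrank ℝ E)⁻¹ • μ := by
    have hcomp : μ.map (fun z ↦ x + r • z) = (μ.map (r • ·)).map (x + ·) :=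
      (Measure.map_map (by fun_prop) (by fun_prop)).symm
    rw [hcomp, Measure.map_addHaar_smul μ hr.ne', Measure.map_smul, map_add_left_eq_self,
      abs_of_pos (by positivity)]
  rw [← hpre, ← Measure.restrict_map (by fun_prop) measurableSet_ball, hmap,
    Measure.restrict_smul]

theorem eLpNorm_comp_add_smul_restrict_ball (x : E) {r : ℝ} (hr : 0 < r) (p : ℝ≥0∞) {v : E → F}
    (hv : AEStronglyMeasurable v (μ.restrict (Metric.ball x r))) :
    eLpNorm (fun z ↦ v (x + r • z)) p (μ.restrict (Metric.ball 0 1)) =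
      ENNReal.ofReal (r ^ (-(Module.finrank ℝ E / p.toReal))) *
        eLpNorm v p (μ.restrict (Metric.ball x r)) := by
  have hmap := map_add_smul_restrict_ball μ x hr
  have hv' : AEStronglyMeasurable v ((μ.restrict (Metric.ball 0 1)).map (x + r • ·)) := by
    rw [hmap]
    exact hv.smul_measure _
  change eLpNorm (v ∘ (x + r • ·)) p _ = _
  rw [← eLpNorm_map_measure hv' (by fun_prop), hmap, eLpNorm_smul_measure_of_ne_zero
      (ENNReal.ofReal_pos.2 (by positivity)).ne', smul_eq_mul,
    ENNReal.ofReal_rpow_of_pos (by positivity), ← Real.rpow_natCast, ← Real.rpow_neg hr.le,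
    ← Real.rpow_mul hr.le, one_div, ENNReal.toReal_inv, neg_mul, ← div_eq_mul_inv]

theorem lintegral_enorm_comp_add_smul_le (x : E) {r : ℝ} (hr : 0 < r) {p : ℝ≥0∞} (hp : 1 ≤ p)
    {v : E → F} (hv : AEStronglyMeasurable v (μ.restrict (Metric.ball x r))) :
    ∫⁻ z in Metric.ball 0 1, ‖v (x + r • z)‖ₑ ∂μ ≤
      μ (Metric.ball 0 1) ^ (1 - 1 / p.toReal) *
        (ENNReal.ofReal (r ^ (-(Module.finrank ℝ E / p.toReal))) *
          eLpNorm v p (μ.restrict (Metric.ball x r))) := by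
  have hcomp : AEStronglyMeasurable (fun z ↦ v (x + r • z)) (μ.restrict (Metric.ball 0 1)) := by
    refine AEStronglyMeasurable.comp_aemeasurable (f := (x + r • ·)) ?_ (by fun_prop)
    rw [map_add_smul_restrict_ball μ x hr]
    exact hv.smul_measure _
  have holder := eLpNorm_le_eLpNorm_mul_rpow_measure_univ hp hcomp
  rwa [eLpNorm_one_eq_lintegral_enorm, eLpNorm_comp_add_smul_restrict_ball μ x hr p hv,
    Measure.restrict_apply_univ, ENNReal.toReal_one, div_one, mul_comm] at holder

theorem lintegral_pow_mul_lintegral_enorm_comp_add_smul_le {p : ℝ≥0∞} (hp : 1 ≤ p) (n : ℕ)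
    {v : E → F} (hv : AEStronglyMeasurable v μ) (x : E) :
    ∫⁻ r in Set.Ioo (0 : ℝ) 1, ENNReal.ofReal (r ^ n) *
        ∫⁻ z in Metric.ball 0 1, ‖v (x + r • z)‖ₑ ∂μ ≤
      μ (Metric.ball 0 1) ^ (1 - 1 / p.toReal) *
        (∫⁻ r in Set.Ioo (0 : ℝ) 1, ENNReal.ofReal (r ^ n) *
          ENNReal.ofReal (r ^ (-(Module.finrank ℝ E / p.toReal)))) *
        eLpNorm v p (μ.restrict (Metric.ball x 1)) := by
  rw [mul_right_comm, ← lintegral_const_mul _ (by fun_prop)]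
  refine setLIntegral_mono' measurableSet_Ioo fun r hr ↦ ?_
  have hball : μ.restrict (Metric.ball x r) ≤ μ.restrict (Metric.ball x 1) :=
    Measure.restrict_mono (Metric.ball_subset_ball hr.2.le) le_rfl
  calc _ ≤ ENNReal.ofReal (r ^ n) * (μ (Metric.ball 0 1) ^ (1 - 1 / p.toReal) *
        (ENNReal.ofReal (r ^ (-(Module.finrank ℝ E / p.toReal))) *
          eLpNorm v p (μ.restrict (Metric.ball x 1)))) := by
        gcongr
        refine (lintegral_enorm_comp_add_smul_le μ x hr.1 hp hv.restrict).trans ?_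
        gcongr
    _ = _ := by ring

end Rescaling

section Taylor

variable {E F : Type*} [NormedAddCommGroup E] [NormedSpace ℝ E]
  [NormedAddCommGroup F] [NormedSpace ℝ F]

theorem enorm_le_sum_enorm_iteratedDeriv_add_lintegral_of_complete [CompleteSpace F] {n : ℕ}
    {φ : ℝ → F} (hφ : ContDiff ℝ (n + 1 : ℕ) φ) :
    ‖φ 0‖ₑ ≤ ∑ j ∈ Finset.range (n + 1), ‖iteratedDeriv j φ 1‖ₑ +
      ∫⁻ r in Set.Ioo 0 1, ENNReal.ofReal (r ^ n) * ‖iteratedDeriv (n + 1) φ r‖ₑ := by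
  have hwithin : ∀ j ≤ n + 1, ∀ r ∈ Set.uIcc (1 : ℝ) 0,
      iteratedDerivWithin j φ (Set.uIcc 1 0) r = iteratedDeriv j φ r := fun j hj r hr ↦
    iteratedDerivWithin_eq_iteratedDeriv (uniqueDiffOn_uIcc one_ne_zero)
      (hφ.of_le (by exact_mod_cast hj)).contDiffAt hr
  have hpoly : ‖taylorWithinEval φ n (Set.uIcc 1 0) 1 0‖ₑ ≤
      ∑ j ∈ Finset.range (n + 1), ‖iteratedDeriv j φ 1‖ₑ := by
    rw [taylor_within_apply]
    refine (enorm_sum_le _ _).trans (Finset.sum_le_sum fun j hj ↦ ?_)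
    rw [hwithin j (Finset.mem_range.1 hj).le 1 Set.left_mem_uIcc]
    refine enorm_le_iff_norm_le.2 ?_
    rw [norm_smul]
    refine mul_le_of_le_one_left (norm_nonneg _) ?_
    simpa [abs_mul] using inv_le_one_of_one_le₀ (Nat.one_le_cast.2 j.factorial_pos)
  have hrem : ‖∫ t in (1 : ℝ)..0, ((0 - t) ^ n / n.factorial) •
      iteratedDerivWithin (n + 1) φ (Set.uIcc 1 0) t‖ₑ ≤
        ∫⁻ r in Set.Ioo 0 1, ENNReal.ofReal (r ^ n) * ‖iteratedDeriv (n + 1) φ r‖ₑ := by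
    rw [intervalIntegral.integral_symm, enorm_neg, intervalIntegral.integral_of_le zero_le_one,
      integral_Ioc_eq_integral_Ioo]
    refine (enorm_integral_le_lintegral_enorm _).trans
      (setLIntegral_mono' measurableSet_Ioo fun r hr ↦ ?_)
    rw [hwithin _ le_rfl r (by rw [Set.uIcc_of_ge zero_le_one]; exact Set.Ioo_subset_Icc_self hr),
      enorm_smul, Real.enorm_eq_ofReal_abs]
    gcongr
    rw [zero_sub, abs_div, abs_pow, abs_neg, abs_of_pos hr.1, Nat.abs_cast]
    exact div_le_self (pow_nonneg hr.1.le _) (Nat.one_le_cast.2 n.factorial_pos)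
  calc ‖φ 0‖ₑ = ‖taylorWithinEval φ n (Set.uIcc 1 0) 1 0 +
        (φ 0 - taylorWithinEval φ n (Set.uIcc 1 0) 1 0)‖ₑ := by rw [add_sub_cancel]
    _ ≤ _ := enorm_add_le _ _
    _ ≤ _ := by
      rw [taylor_integral_remainder hφ.contDiffOn]
      exact add_le_add hpoly hrem

theorem enorm_le_sum_enorm_iteratedDeriv_add_lintegral {n : ℕ} {φ : ℝ → F}
    (hφ : ContDiff ℝ (n + 1 : ℕ) φ) :
    ‖φ 0‖ₑ ≤ ∑ j ∈ Finset.range (n + 1), ‖iteratedDeriv j φ 1‖ₑ +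
      ∫⁻ r in Set.Ioo 0 1, ENNReal.ofReal (r ^ n) * ‖iteratedDeriv (n + 1) φ r‖ₑ := by
  -- The Bochner integral needs a complete codomain; passing to the completion changes no norm.
  let ι : F →ₗᵢ[ℝ] UniformSpace.Completion F := UniformSpace.Completion.toComplₗᵢ
  have hι : ∀ j ≤ n + 1, ∀ r, ‖iteratedDeriv j (ι ∘ φ) r‖ₑ = ‖iteratedDeriv j φ r‖ₑ := by
    intro j hj r
    rw [← ofReal_norm, ← ofReal_norm, ← norm_iteratedFDeriv_eq_norm_iteratedDeriv,
      ← norm_iteratedFDeriv_eq_norm_iteratedDeriv,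
      ι.norm_iteratedFDeriv_comp_left hφ.contDiffAt (by exact_mod_cast hj)]
  have h := enorm_le_sum_enorm_iteratedDeriv_add_lintegral_of_complete
    (ι.contDiff.comp hφ : ContDiff ℝ (n + 1 : ℕ) (ι ∘ φ))
  rw [Finset.sum_congr rfl fun j hj ↦ hι j (Finset.mem_range.1 hj).le 1] at h
  simpa only [hι _ le_rfl, Function.comp_apply, ← ofReal_norm, ι.norm_map] using h

theorem norm_iteratedDeriv_comp_add_smul_le {j : ℕ} {u : E → F} (hu : ContDiff ℝ j u) (x z : E)
    (r : ℝ) :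
    ‖iteratedDeriv j (fun t : ℝ ↦ u (x + t • z)) r‖ ≤
      ‖iteratedFDeriv ℝ j u (x + r • z)‖ * ‖z‖ ^ j := by
  let line : ℝ →L[ℝ] E := ContinuousLinearMap.toSpanSingleton ℝ z
  have hux : ContDiff ℝ j (fun y ↦ u (x + y)) := hu.comp (contDiff_const.add contDiff_id)
  have h := line.iteratedFDeriv_comp_right hux r le_rfl
  rw [iteratedFDeriv_comp_add_left] at h
  rw [← norm_iteratedFDeriv_eq_norm_iteratedDeriv]
  change ‖iteratedFDeriv ℝ j ((fun y ↦ u (x + y)) ∘ line) r‖ ≤ _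
  rw [h]
  refine (ContinuousMultilinearMap.norm_compContinuousLinearMap_le _ _).trans_eq ?_
  simp [line, ContinuousLinearMap.norm_toSpanSingleton]

theorem enorm_le_sum_enorm_iteratedFDeriv_add_lintegral {n : ℕ} {u : E → F}
    (hu : ContDiff ℝ (n + 1 : ℕ) u) (x : E) {z : E} (hz : ‖z‖ ≤ 1) :
    ‖u x‖ₑ ≤ ∑ j ∈ Finset.range (n + 1), ‖iteratedFDeriv ℝ j u (x + z)‖ₑ +
      ∫⁻ r in Set.Ioo (0 : ℝ) 1,
        ENNReal.ofReal (r ^ n) * ‖iteratedFDeriv ℝ (n + 1) u (x + r • z)‖ₑ := by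
  have hline : ∀ j ≤ n + 1, ∀ r : ℝ, ‖iteratedDeriv j (fun t : ℝ ↦ u (x + t • z)) r‖ₑ ≤
      ‖iteratedFDeriv ℝ j u (x + r • z)‖ₑ := fun j hj r ↦ enorm_le_iff_norm_le.2 <|
    (norm_iteratedDeriv_comp_add_smul_le (hu.of_le (by exact_mod_cast hj)) x z r).trans <|
      mul_le_of_le_one_right (norm_nonneg _) (pow_le_one₀ (norm_nonneg _) hz)
  have hφ : ContDiff ℝ (n + 1 : ℕ) (fun t : ℝ ↦ u (x + t • z)) := by fun_prop
  have taylor := enorm_le_sum_enorm_iteratedDeriv_add_lintegral hφ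
  rw [zero_smul, add_zero] at taylor
  refine taylor.trans (add_le_add (Finset.sum_le_sum fun j hj ↦ ?_) (lintegral_mono fun r ↦ ?_))
  · simpa only [one_smul] using hline j (Finset.mem_range.1 hj).le 1
  · dsimp only
    gcongr
    exact hline _ le_rfl r

end Taylor

section LocalSobolev

variable {E F : Type*} [NormedAddCommGroup E] [NormedSpace ℝ E] [FiniteDimensional ℝ E]
  [MeasurableSpace E] [BorelSpace E] (μ : Measure E) [μ.IsAddHaarMeasure]
  [NormedAddCommGroup F] [NormedSpace ℝ F]

-- `(1 : ℝ) • z` is kept so that the rescaling lemmas apply at `r = 1`.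
theorem measure_ball_mul_enorm_le_lintegral_iteratedFDeriv {n : ℕ} {u : E → F}
    (hu : ContDiff ℝ (n + 1 : ℕ) u) (x : E) :
    μ (Metric.ball 0 1) * ‖u x‖ₑ ≤
      ∑ j ∈ Finset.range (n + 1),
        ∫⁻ z in Metric.ball 0 1, ‖iteratedFDeriv ℝ j u (x + (1 : ℝ) • z)‖ₑ ∂μ +
      ∫⁻ r in Set.Ioo (0 : ℝ) 1, ENNReal.ofReal (r ^ n) *
        ∫⁻ z in Metric.ball 0 1, ‖iteratedFDeriv ℝ (n + 1) u (x + r • z)‖ₑ ∂μ := by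
  have hcont : ∀ j ≤ n + 1, Continuous (iteratedFDeriv ℝ j u) := fun j hj ↦
    hu.continuous_iteratedFDeriv (by exact_mod_cast hj)
  have hmeas : ∀ j ∈ Finset.range (n + 1),
      Measurable fun z ↦ ‖iteratedFDeriv ℝ j u (x + (1 : ℝ) • z)‖ₑ := fun j hj ↦
    ((hcont j (Finset.mem_range.1 hj).le).comp (by fun_prop)).enorm.measurable
  have hmeas_prod : Measurable fun q : E × ℝ ↦
      ENNReal.ofReal (q.2 ^ n) * ‖iteratedFDeriv ℝ (n + 1) u (x + q.2 • q.1)‖ₑ :=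
    (by fun_prop : Measurable fun q : E × ℝ ↦ ENNReal.ofReal (q.2 ^ n)).mul
      ((hcont _ le_rfl).comp (by fun_prop)).enorm.measurable
  calc μ (Metric.ball 0 1) * ‖u x‖ₑ = ∫⁻ _ in Metric.ball 0 1, ‖u x‖ₑ ∂μ := by
        rw [setLIntegral_const, mul_comm]
    _ ≤ ∫⁻ z in Metric.ball 0 1,
          (∑ j ∈ Finset.range (n + 1), ‖iteratedFDeriv ℝ j u (x + (1 : ℝ) • z)‖ₑ +
            ∫⁻ r in Set.Ioo (0 : ℝ) 1,
              ENNReal.ofReal (r ^ n) * ‖iteratedFDeriv ℝ (n + 1) u (x + r • z)‖ₑ) ∂μ := by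
        refine setLIntegral_mono' measurableSet_ball fun z hz ↦ ?_
        rw [one_smul]
        exact enorm_le_sum_enorm_iteratedFDeriv_add_lintegral hu x (mem_ball_zero_iff.1 hz).le
    _ = _ := by
        rw [lintegral_add_left (Finset.measurable_fun_sum _ hmeas),
          lintegral_finsetSum _ hmeas, lintegral_lintegral_swap hmeas_prod.aemeasurable]
        simp only [lintegral_const_mul' _ _ ENNReal.ofReal_ne_top]

theorem lintegral_Ioo_pow_mul_rpow_neg_lt_top {n : ℕ} {s : ℝ} (hs : s < n + 1) :
    ∫⁻ r in Set.Ioo (0 : ℝ) 1, ENNReal.ofReal (r ^ n) * ENNReal.ofReal (r ^ (-s)) < ∞ := by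
  have hint : IntegrableOn (fun r : ℝ ↦ r ^ (n - s)) (Set.Ioo 0 1) :=
    (intervalIntegral.integrableOn_Ioo_rpow_iff one_pos).2 (by linarith)
  refine (setLIntegral_congr_fun measurableSet_Ioo fun r hr ↦ ?_).trans_lt hint.lintegral_lt_top
  rw [← ENNReal.ofReal_mul (pow_nonneg hr.1.le _), sub_eq_add_neg, Real.rpow_add hr.1,
    Real.rpow_natCast]

theorem measure_ball_mul_enorm_le_sum_eLpNorm_iteratedFDeriv {p : ℝ≥0∞} (hp : 1 ≤ p) {n : ℕ}
    {u : E → F} (hu : ContDiff ℝ (n + 1 : ℕ) u) (x : E) :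
    μ (Metric.ball 0 1) * ‖u x‖ₑ ≤ μ (Metric.ball 0 1) ^ (1 - 1 / p.toReal) *
      (1 + ∫⁻ r in Set.Ioo (0 : ℝ) 1, ENNReal.ofReal (r ^ n) *
        ENNReal.ofReal (r ^ (-(Module.finrank ℝ E / p.toReal)))) *
      ∑ j ∈ Finset.range (n + 2),
        eLpNorm (iteratedFDeriv ℝ j u) p (μ.restrict (Metric.ball x 1)) := by
  set b := μ (Metric.ball 0 1) ^ (1 - 1 / p.toReal)
  set I := ∫⁻ r in Set.Ioo (0 : ℝ) 1, ENNReal.ofReal (r ^ n) *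
    ENNReal.ofReal (r ^ (-(Module.finrank ℝ E / p.toReal)))
  set N := fun j ↦ eLpNorm (iteratedFDeriv ℝ j u) p (μ.restrict (Metric.ball x 1))
  have hmeas : ∀ j ≤ n + 1, AEStronglyMeasurable (iteratedFDeriv ℝ j u) μ := fun j hj ↦
    (hu.continuous_iteratedFDeriv (by exact_mod_cast hj)).aestronglyMeasurable
  have hlow : ∀ j ∈ Finset.range (n + 1),
      ∫⁻ z in Metric.ball 0 1, ‖iteratedFDeriv ℝ j u (x + (1 : ℝ) • z)‖ₑ ∂μ ≤ b * N j :=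
    fun j hj ↦ by
      simpa only [Real.one_rpow, ENNReal.ofReal_one, one_mul] using
        lintegral_enorm_comp_add_smul_le μ x one_pos hp
          (hmeas j (Finset.mem_range.1 hj).le).restrict
  have htop := lintegral_pow_mul_lintegral_enorm_comp_add_smul_le μ hp n (hmeas _ le_rfl) x
  calc _ ≤ ∑ j ∈ Finset.range (n + 1), b * N j + b * I * N (n + 1) :=
        (measure_ball_mul_enorm_le_lintegral_iteratedFDeriv μ hu x).trans
          (add_le_add (Finset.sum_le_sum hlow) htop)
    _ ≤ b * (1 + I) * ∑ j ∈ Finset.range (n + 1), N j + b * (1 + I) * N (n + 1) := by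
        rw [← Finset.mul_sum]
        gcongr
        · exact le_mul_of_one_le_right' le_self_add
        · exact le_add_self
    _ = b * (1 + I) * ∑ j ∈ Finset.range (n + 2), N j := by
        rw [Finset.sum_range_succ _ (n + 1), mul_add (b * (1 + I))]

theorem exists_enorm_le_sum_eLpNorm_iteratedFDeriv_restrict_ball {p : ℝ≥0∞} (hp : 1 ≤ p) {l : ℕ}
    (hl : Module.finrank ℝ E / p.toReal < l) :
    ∃ C : ℝ≥0∞, C ≠ ∞ ∧ ∀ u : E → F, ContDiff ℝ l u → ∀ x,
      ‖u x‖ₑ ≤ C * ∑ j ∈ Finset.range (l + 1),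
        eLpNorm (iteratedFDeriv ℝ j u) p (μ.restrict (Metric.ball x 1)) := by
  have hl_pos : (0 : ℝ) < l := lt_of_le_of_lt (by positivity) hl
  obtain ⟨n, rfl⟩ := Nat.exists_eq_succ_of_ne_zero (Nat.cast_pos.1 hl_pos).ne'
  set b := μ (Metric.ball 0 1)
  set I := ∫⁻ r in Set.Ioo (0 : ℝ) 1, ENNReal.ofReal (r ^ n) *
    ENNReal.ofReal (r ^ (-(Module.finrank ℝ E / p.toReal)))
  have hb_pos : b ≠ 0 := (Metric.measure_ball_pos μ _ one_pos).ne'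
  have hb_top : b ≠ ∞ := measure_ball_lt_top.ne
  have hI_top : I ≠ ∞ :=
    (lintegral_Ioo_pow_mul_rpow_neg_lt_top (by simpa only [Nat.cast_succ] using hl)).ne
  have hbpow_top : b ^ (1 - 1 / p.toReal) ≠ ∞ := ENNReal.rpow_ne_top_of_ne_zero hb_pos hb_top
  refine ⟨b⁻¹ * (b ^ (1 - 1 / p.toReal) * (1 + I)), by finiteness, fun u hu x ↦ ?_⟩
  rw [mul_assoc b⁻¹, ← ENNReal.mul_le_iff_le_inv hb_pos hb_top]
  exact measure_ball_mul_enorm_le_sum_eLpNorm_iteratedFDeriv μ hp hu x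

end LocalSobolev

section JapaneseBracket

variable {d : ℕ}

theorem jb_pos (x : EuclideanSpace ℝ (Fin d)) : 0 < jb x :=
  Real.sqrt_pos.2 (by positivity)

theorem continuous_jb_rpow (δ : ℝ) : Continuous fun x : EuclideanSpace ℝ (Fin d) ↦ jb x ^ δ :=
  Continuous.rpow_const (by unfold jb; fun_prop) fun x ↦ Or.inl (jb_pos x).ne'

theorem jb_le_one_add_norm_sub_mul_jb (x y : EuclideanSpace ℝ (Fin d)) :
    jb x ≤ (1 + ‖x - y‖) * jb y := by
  have hsq : jb y ^ 2 = 1 + ‖y‖ ^ 2 := Real.sq_sqrt (by positivity)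
  have hone : 1 ≤ jb y := Real.one_le_sqrt.2 (by nlinarith [norm_nonneg y])
  have hnorm : ‖y‖ ≤ jb y := Real.le_sqrt_of_sq_le (by linarith)
  have htri : ‖x‖ ≤ ‖x - y‖ + ‖y‖ := by simpa using norm_add_le (x - y) y
  have hadd : jb x ≤ jb y + ‖x - y‖ :=
    Real.sqrt_le_iff.2 ⟨by positivity, by nlinarith [norm_nonneg x, norm_nonneg (x - y)]⟩
  nlinarith [norm_nonneg (x - y)]

theorem jb_rpow_le_one_add_norm_sub_rpow_mul (δ : ℝ) (x y : EuclideanSpace ℝ (Fin d)) :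
    jb x ^ δ ≤ (1 + ‖x - y‖) ^ |δ| * jb y ^ δ := by
  have hc : 0 < 1 + ‖x - y‖ := by positivity
  rcases le_total 0 δ with hδ | hδ
  · rw [abs_of_nonneg hδ, ← Real.mul_rpow hc.le (jb_pos y).le]
    exact Real.rpow_le_rpow (jb_pos x).le (jb_le_one_add_norm_sub_mul_jb x y) hδ
  · have hyx : jb y ≤ (1 + ‖x - y‖) * jb x := norm_sub_rev x y ▸ jb_le_one_add_norm_sub_mul_jb y x
    have h := Real.rpow_le_rpow_of_nonpos (jb_pos y) hyx hδ
    rw [Real.mul_rpow hc.le (jb_pos x).le] at h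
    rwa [abs_of_nonpos hδ, Real.rpow_neg hc.le, ← div_eq_inv_mul, le_div_iff₀' (by positivity)]

variable {F : Type*} [NormedAddCommGroup F] [NormedSpace ℝ F]

theorem ofReal_jb_rpow_mul_eLpNorm_restrict_ball_le (δ : ℝ) (p : ℝ≥0∞)
    (x : EuclideanSpace ℝ (Fin d)) (v : EuclideanSpace ℝ (Fin d) → F) :
    ENNReal.ofReal (jb x ^ δ) * eLpNorm v p (volume.restrict (Metric.ball x 1)) ≤
      ENNReal.ofReal (2 ^ |δ|) * eLpNorm (fun y ↦ jb y ^ δ • v y) p volume := by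
  have hweight : ∀ y ∈ Metric.ball x 1, ‖jb x ^ δ • v y‖ ≤ 2 ^ |δ| * ‖jb y ^ δ • v y‖ := by
    intro y hy
    have hxy : ‖x - y‖ ≤ 1 := (mem_ball_iff_norm'.1 hy).le
    rw [norm_smul, norm_smul, Real.norm_of_nonneg (Real.rpow_nonneg (jb_pos x).le δ),
      Real.norm_of_nonneg (Real.rpow_nonneg (jb_pos y).le δ), ← mul_assoc]
    refine mul_le_mul_of_nonneg_right
      ((jb_rpow_le_one_add_norm_sub_rpow_mul δ x y).trans ?_) (norm_nonneg _)
    gcongr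
    · exact Real.rpow_nonneg (jb_pos y).le δ
    · linarith
  calc _ = eLpNorm (fun y ↦ jb x ^ δ • v y) p (volume.restrict (Metric.ball x 1)) := by
        rw [← Real.enorm_of_nonneg (Real.rpow_nonneg (jb_pos x).le δ)]
        exact (eLpNorm_const_smul _ v p _).symm
    _ ≤ ENNReal.ofReal (2 ^ |δ|) *
          eLpNorm (fun y ↦ jb y ^ δ • v y) p (volume.restrict (Metric.ball x 1)) :=
        eLpNorm_le_mul_eLpNorm_of_ae_le_mul
          ((ae_restrict_mem measurableSet_ball).mono hweight) p
    _ ≤ _ := by gcongr; exact Measure.restrict_le_self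

theorem exists_ofReal_jb_rpow_mul_enorm_le_sum_eLpNorm_iteratedFDeriv {p : ℝ≥0∞} (hp : 1 ≤ p)
    (δ : ℝ) {l : ℕ} (hl : d / p.toReal < l) :
    ∃ C : ℝ≥0∞, C ≠ ∞ ∧ ∀ u : EuclideanSpace ℝ (Fin d) → F, ContDiff ℝ l u → ∀ x,
      ENNReal.ofReal (jb x ^ δ) * ‖u x‖ₑ ≤ C * ∑ j ∈ Finset.range (l + 1),
        eLpNorm (fun y ↦ jb y ^ δ • iteratedFDeriv ℝ j u y) p volume := by
  obtain ⟨C, hC, hlocal⟩ := exists_enorm_le_sum_eLpNorm_iteratedFDeriv_restrict_ball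
    (F := F) (volume : Measure (EuclideanSpace ℝ (Fin d))) hp (l := l)
    (by rwa [finrank_euclideanSpace_fin])
  refine ⟨C * ENNReal.ofReal (2 ^ |δ|), by finiteness, fun u hu x ↦ ?_⟩
  calc _ ≤ ENNReal.ofReal (jb x ^ δ) * (C * ∑ j ∈ Finset.range (l + 1),
          eLpNorm (iteratedFDeriv ℝ j u) p (volume.restrict (Metric.ball x 1))) := by
        gcongr
        exact hlocal u hu x
    _ = C * ∑ j ∈ Finset.range (l + 1), ENNReal.ofReal (jb x ^ δ) *
          eLpNorm (iteratedFDeriv ℝ j u) p (volume.restrict (Metric.ball x 1)) := by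
        rw [mul_left_comm, Finset.mul_sum]
    _ ≤ C * ∑ j ∈ Finset.range (l + 1), ENNReal.ofReal (2 ^ |δ|) *
          eLpNorm (fun y ↦ jb y ^ δ • iteratedFDeriv ℝ j u y) p volume := by
        exact mul_le_mul_right (Finset.sum_le_sum fun j _ ↦
          ofReal_jb_rpow_mul_eLpNorm_restrict_ball_le δ p x (iteratedFDeriv ℝ j u)) C
    _ = _ := by rw [← Finset.mul_sum, mul_assoc]

end JapaneseBracket

section MultiIndex

variable {d : ℕ} {F : Type*} [NormedAddCommGroup F] [NormedSpace ℝ F]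
  {f : EuclideanSpace ℝ (Fin d) → F}

theorem contDiff_pderiv' {n : ℕ} (hf : ContDiff ℝ (n + 1 : ℕ) f) (i : Fin d) :
    ContDiff ℝ n (pderiv' i f) :=
  (hf.fderiv_right (by norm_cast)).clm_apply contDiff_const

theorem contDiff_iterate_pderiv' {n a : ℕ} (hf : ContDiff ℝ (n + a : ℕ) f) (i : Fin d) :
    ContDiff ℝ n ((pderiv' i)^[a] f) := by
  induction a generalizing f with
  | zero => exact hf
  | succ a ih => exact ih (contDiff_pderiv' hf i)

theorem pderiv'_comm (hf : ContDiff ℝ 2 f) (i j : Fin d) :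
    pderiv' i (pderiv' j f) = pderiv' j (pderiv' i f) := by
  have hdiff : Differentiable ℝ (fderiv ℝ f) :=
    (hf.fderiv_right (m := 1) le_rfl).differentiable one_ne_zero
  have hsnd : ∀ (a b : Fin d) y, pderiv' a (pderiv' b f) y = fderiv ℝ (fderiv ℝ f) y
      (EuclideanSpace.single a 1) (EuclideanSpace.single b 1) := by
    intro a b y
    unfold pderiv'
    rw [fderiv_clm_apply (hdiff y) (differentiableAt_const _)]
    simp
  funext y
  rw [hsnd, hsnd]
  exact hf.contDiffAt.isSymmSndFDerivAt (by simp) _ _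

theorem pderiv'_iterate_comm {a : ℕ} (hf : ContDiff ℝ (a + 1 : ℕ) f) (i j : Fin d) :
    pderiv' i ((pderiv' j)^[a] f) = (pderiv' j)^[a] (pderiv' i f) := by
  induction a generalizing f with
  | zero => rfl
  | succ a ih =>
    rw [Function.iterate_succ_apply, Function.iterate_succ_apply, ih (contDiff_pderiv' hf j),
      pderiv'_comm (hf.of_le (by norm_cast; lia))]

/-- The part of `mderiv α f` that differentiates only in the coordinates listed in `L`. -/
noncomputable def mderivAlong (L : List (Fin d)) (α : Fin d → ℕ)
    (f : EuclideanSpace ℝ (Fin d) → F) : EuclideanSpace ℝ (Fin d) → F :=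
  L.foldr (fun i g ↦ (pderiv' i)^[α i] g) f

theorem mderivAlong_cons (i : Fin d) (L : List (Fin d)) (α : Fin d → ℕ) :
    mderivAlong (i :: L) α f = (pderiv' i)^[α i] (mderivAlong L α f) :=
  rfl

theorem mderivAlong_congr {L : List (Fin d)} {α β : Fin d → ℕ} (h : ∀ i ∈ L, α i = β i) :
    mderivAlong L α f = mderivAlong L β f := by
  induction L with
  | nil => rfl
  | cons i L ih =>
    rw [List.forall_mem_cons] at h
    rw [mderivAlong_cons, mderivAlong_cons, h.1, ih h.2]

theorem contDiff_mderivAlong {n : ℕ} {L : List (Fin d)} {α : Fin d → ℕ}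
    (hf : ContDiff ℝ (n + (L.map α).sum : ℕ) f) : ContDiff ℝ n (mderivAlong L α f) := by
  induction L generalizing n with
  | nil => exact hf
  | cons i L ih =>
    rw [List.map_cons, List.sum_cons, ← add_assoc] at hf
    exact contDiff_iterate_pderiv' (ih hf) i

theorem pderiv'_mderivAlong {L : List (Fin d)} (hL : L.Nodup) {α : Fin d → ℕ}
    (hf : ContDiff ℝ ((L.map α).sum + 1 : ℕ) f) {i : Fin d} (hi : i ∈ L) :
    pderiv' i (mderivAlong L α f) = mderivAlong L (α + Pi.single i 1) f := by
  induction L with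
  | nil => simp at hi
  | cons j L ih =>
    obtain ⟨hjL, hL⟩ := List.nodup_cons.1 hL
    rw [List.map_cons, List.sum_cons] at hf
    rw [mderivAlong_cons, mderivAlong_cons]
    rcases eq_or_ne i j with rfl | hij
    · have htail : ∀ k ∈ L, α k = (α + Pi.single i 1 : Fin d → ℕ) k := fun k hk ↦ by
        simp [ne_of_mem_of_not_mem hk hjL]
      rw [← mderivAlong_congr htail, Pi.add_apply, Pi.single_eq_same,
        Function.iterate_succ_apply']
    · have htail : pderiv' i (mderivAlong L α f) = mderivAlong L (α + Pi.single i 1) f :=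
        ih hL (hf.of_le (by norm_cast; lia)) ((List.mem_cons.1 hi).resolve_left hij)
      have hsmooth : ContDiff ℝ (α j + 1 : ℕ) (mderivAlong L α f) :=
        contDiff_mderivAlong (hf.of_le (by norm_cast; lia))
      rw [pderiv'_iterate_comm hsmooth, htail, Pi.add_apply, Pi.single_eq_of_ne hij.symm, add_zero]

theorem contDiff_mderiv {n : ℕ} {α : Fin d → ℕ} (hf : ContDiff ℝ (n + ∑ i, α i : ℕ) f) :
    ContDiff ℝ n (mderiv α f) :=
  contDiff_mderivAlong (L := List.finRange d) (by rwa [← Fin.sum_univ_def])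

theorem pderiv'_mderiv {α : Fin d → ℕ} (hf : ContDiff ℝ (∑ i, α i + 1 : ℕ) f) (i : Fin d) :
    pderiv' i (mderiv α f) = mderiv (α + Pi.single i 1) f :=
  pderiv'_mderivAlong (List.nodup_finRange d) (by rwa [← Fin.sum_univ_def]) (List.mem_finRange i)

theorem hasCompactSupport_iterate_pderiv' (hf : HasCompactSupport f) (i : Fin d) (a : ℕ) :
    HasCompactSupport ((pderiv' i)^[a] f) := by
  induction a generalizing f with
  | zero => exact hf
  | succ _ ih => exact ih (hf.fderiv_apply ℝ _)

theorem hasCompactSupport_mderiv (hf : HasCompactSupport f) (α : Fin d → ℕ) :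
    HasCompactSupport (mderiv α f) := by
  unfold mderiv
  induction List.finRange d with
  | nil => exact hf
  | cons i L ih => exact hasCompactSupport_iterate_pderiv' ih i (α i)

theorem memLp_jb_rpow_smul_mderiv_of_hasCompactSupport {m : ℕ} (hf : ContDiff ℝ m f)
    (hsupp : HasCompactSupport f) (δ : ℝ) (p : ℝ≥0∞) {α : Fin d → ℕ} (hα : ∑ i, α i ≤ m) :
    MemLp (fun y ↦ jb y ^ δ • mderiv α f y) p volume := by
  have hcont : Continuous (mderiv α f) :=
    (contDiff_mderiv (n := 0) (hf.of_le (by norm_cast; lia))).continuous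
  exact ((continuous_jb_rpow δ).smul hcont).memLp_of_hasCompactSupport
    (hasCompactSupport_mderiv hsupp α).smul_left

theorem fderiv_eq_sum_smulRight_pderiv' (f : EuclideanSpace ℝ (Fin d) → F)
    (y : EuclideanSpace ℝ (Fin d)) :
    fderiv ℝ f y = ∑ i, (EuclideanSpace.proj i).smulRight (pderiv' i f y) := by
  ext z
  conv_lhs => rw [← (EuclideanSpace.basisFun (Fin d) ℝ).sum_repr z]
  simp [pderiv']

theorem norm_iteratedFDeriv_succ_le_sum_pderiv' {j : ℕ} (hf : ContDiff ℝ (j + 1 : ℕ) f)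
    (y : EuclideanSpace ℝ (Fin d)) :
    ‖iteratedFDeriv ℝ (j + 1) f y‖ ≤ ∑ i, ‖iteratedFDeriv ℝ j (pderiv' i f) y‖ := by
  let T : Fin d → F →L[ℝ] EuclideanSpace ℝ (Fin d) →L[ℝ] F := fun i ↦
    ContinuousLinearMap.smulRightL ℝ _ F (EuclideanSpace.proj i)
  have hproj : ∀ i : Fin d, ‖(EuclideanSpace.proj i : EuclideanSpace ℝ (Fin d) →L[ℝ] ℝ)‖ ≤ 1 :=
    fun i ↦ ContinuousLinearMap.opNorm_le_bound _ zero_le_one fun z ↦ by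
      simpa using PiLp.norm_apply_le z i
  have hT : ∀ i, ‖T i‖ ≤ 1 := fun i ↦
    ContinuousLinearMap.opNorm_le_bound _ zero_le_one fun w ↦ by
      simpa [T] using mul_le_mul_of_nonneg_right (hproj i) (norm_nonneg w)
  have hsmooth : ∀ i, ContDiff ℝ j (pderiv' i f) := contDiff_pderiv' hf
  have hfderiv : fderiv ℝ f = fun y ↦ ∑ i, (T i ∘ pderiv' i f) y :=
    funext (fderiv_eq_sum_smulRight_pderiv' f)
  rw [← norm_iteratedFDeriv_fderiv, hfderiv, iteratedFDeriv_fun_sum_apply fun i _ ↦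
    ((T i).contDiff.comp (hsmooth i)).contDiffAt]
  refine norm_sum_le_of_le _ fun i _ ↦ ?_
  exact ((T i).norm_iteratedFDeriv_comp_left (hsmooth i).contDiffAt le_rfl).trans
    (mul_le_of_le_one_left (norm_nonneg _) (hT i))

/-- The pointwise size `∑_{|α| ≤ m} ‖∂^α f(y)‖` of the `m`-jet of `f` at `y`, indexed as in
`Hnorm`. -/
noncomputable def jetNorm (m : ℕ) (f : EuclideanSpace ℝ (Fin d) → F)
    (y : EuclideanSpace ℝ (Fin d)) : ℝ :=
  ∑ α ∈ Finset.univ.filter (fun α : Fin d → Fin (m + 1) ↦ ∑ i, (α i : ℕ) ≤ m),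
    ‖mderiv (fun i ↦ (α i : ℕ)) f y‖

theorem norm_mderiv_le_jetNorm {m : ℕ} {α : Fin d → ℕ} (hα : ∑ i, α i ≤ m)
    (f : EuclideanSpace ℝ (Fin d) → F) (y : EuclideanSpace ℝ (Fin d)) :
    ‖mderiv α f y‖ ≤ jetNorm m f y := by
  have hlt : ∀ i, α i < m + 1 := fun i ↦ Nat.lt_succ_of_le <|
    (Finset.single_le_sum (fun _ _ ↦ Nat.zero_le _) (Finset.mem_univ i)).trans hα
  exact Finset.single_le_sum
    (f := fun α : Fin d → Fin (m + 1) ↦ ‖mderiv (fun i ↦ (α i : ℕ)) f y‖)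
    (fun _ _ ↦ norm_nonneg _) (a := fun i ↦ ⟨α i, hlt i⟩) (by simpa using hα)

theorem norm_iteratedFDeriv_mderiv_le_jetNorm {m j : ℕ} (hf : ContDiff ℝ m f) {α : Fin d → ℕ}
    (hα : ∑ i, α i + j ≤ m) (y : EuclideanSpace ℝ (Fin d)) :
    ‖iteratedFDeriv ℝ j (mderiv α f) y‖ ≤ d ^ j * jetNorm m f y := by
  induction j generalizing α with
  | zero => simpa using norm_mderiv_le_jetNorm hα f y
  | succ j ih =>
    have hsmooth : ContDiff ℝ (j + 1 : ℕ) (mderiv α f) :=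
      contDiff_mderiv (hf.of_le (by norm_cast; lia))
    calc _ ≤ ∑ i, ‖iteratedFDeriv ℝ j (pderiv' i (mderiv α f)) y‖ :=
          norm_iteratedFDeriv_succ_le_sum_pderiv' hsmooth y
      _ ≤ ∑ _i : Fin d, (d : ℝ) ^ j * jetNorm m f y := by
          refine Finset.sum_le_sum fun i _ ↦ ?_
          rw [pderiv'_mderiv (hf.of_le (by norm_cast; lia))]
          refine ih ?_
          simp only [Pi.add_apply, Finset.sum_add_distrib, Finset.sum_pi_single', Finset.mem_univ,
            if_true]
          lia
      _ = _ := by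
          rw [Finset.sum_const, Finset.card_univ, Fintype.card_fin, nsmul_eq_mul, pow_succ',
            mul_assoc]

end MultiIndex

section WeightedSobolevNorm

variable {d m : ℕ} {F : Type*} [NormedAddCommGroup F] [NormedSpace ℝ F] {p δ : ℝ}
  {f : EuclideanSpace ℝ (Fin d) → F}

theorem Hnorm_nonneg (d m : ℕ) (p δ : ℝ) (f : EuclideanSpace ℝ (Fin d) → F) :
    0 ≤ Hnorm d m p δ f :=
  Finset.sum_nonneg fun _ _ ↦ ENNReal.toReal_nonneg

theorem eLpNorm_jb_rpow_smul_jetNorm_le (hp : 1 ≤ p)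
    (hLp : ∀ α : Fin d → ℕ, ∑ i, α i ≤ m →
      MemLp (fun y ↦ jb y ^ δ • mderiv α f y) (ENNReal.ofReal p) volume) :
    eLpNorm (fun y ↦ jb y ^ δ • jetNorm m f y) (ENNReal.ofReal p) volume ≤
      ENNReal.ofReal (Hnorm d m p δ f) := by
  set s := Finset.univ.filter (fun α : Fin d → Fin (m + 1) ↦ ∑ i, (α i : ℕ) ≤ m) with hs
  have hmem : ∀ α ∈ s,
      MemLp (fun y ↦ jb y ^ δ • mderiv (fun i ↦ (α i : ℕ)) f y) (ENNReal.ofReal p) volume :=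
    fun α hα ↦ hLp _ (Finset.mem_filter.1 hα).2
  have hjet : (fun y ↦ jb y ^ δ • jetNorm m f y) =
      ∑ α ∈ s, fun y ↦ ‖jb y ^ δ • mderiv (fun i ↦ (α i : ℕ)) f y‖ := by
    funext y
    simp only [Finset.sum_apply, norm_smul, Real.norm_of_nonneg (Real.rpow_nonneg (jb_pos y).le δ),
      ← Finset.mul_sum, smul_eq_mul, jetNorm, hs]
  calc _ ≤ ∑ α ∈ s, eLpNorm (fun y ↦ ‖jb y ^ δ • mderiv (fun i ↦ (α i : ℕ)) f y‖)
          (ENNReal.ofReal p) volume := by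
        rw [hjet]
        exact eLpNorm_sum_le (fun α hα ↦ (hmem α hα).1.norm) (ENNReal.one_le_ofReal.2 hp)
    _ = ∑ α ∈ s, ENNReal.ofReal (wLp p δ (mderiv (fun i ↦ (α i : ℕ)) f)) := by
        refine Finset.sum_congr rfl fun α hα ↦ ?_
        rw [eLpNorm_norm, wLp, ENNReal.ofReal_toReal (hmem α hα).eLpNorm_ne_top]
    _ = _ := (ENNReal.ofReal_sum_of_nonneg fun _ _ ↦ ENNReal.toReal_nonneg).symm

theorem eLpNorm_jb_rpow_smul_iteratedFDeriv_mderiv_le (hp : 1 ≤ p) (hf : ContDiff ℝ m f)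
    (hLp : ∀ α : Fin d → ℕ, ∑ i, α i ≤ m →
      MemLp (fun y ↦ jb y ^ δ • mderiv α f y) (ENNReal.ofReal p) volume)
    {j : ℕ} {α : Fin d → ℕ} (hα : ∑ i, α i + j ≤ m) :
    eLpNorm (fun y ↦ jb y ^ δ • iteratedFDeriv ℝ j (mderiv α f) y) (ENNReal.ofReal p) volume ≤
      ENNReal.ofReal (d ^ j) * ENNReal.ofReal (Hnorm d m p δ f) := by
  have hpointwise : ∀ y, ‖jb y ^ δ • iteratedFDeriv ℝ j (mderiv α f) y‖ ≤
      d ^ j * ‖jb y ^ δ • jetNorm m f y‖ := fun y ↦ by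
    rw [norm_smul, norm_smul, mul_left_comm]
    gcongr
    exact (norm_iteratedFDeriv_mderiv_le_jetNorm hf hα y).trans (by gcongr; exact le_abs_self _)
  exact (eLpNorm_le_mul_eLpNorm_of_ae_le_mul (.of_forall hpointwise) _).trans
    (mul_le_mul_right (eLpNorm_jb_rpow_smul_jetNorm_le hp hLp) _)

end WeightedSobolevNorm

theorem stmt18_general {F : Type*} [NormedAddCommGroup F] [NormedSpace ℝ F] (d : ℕ) (p : ℝ)
    (hp : 1 ≤ p) (m : ℕ) (δ : ℝ) (k : ℕ) (hk : (k : ℝ) < (m : ℝ) - (d : ℝ) / p) :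
    ∃ C : ℝ, 0 < C ∧ ∀ f : EuclideanSpace ℝ (Fin d) → F, ContDiff ℝ m f →
      (∀ α : Fin d → ℕ, ∑ i, α i ≤ m →
        MemLp (fun x ↦ jb x ^ δ • mderiv α f x) (ENNReal.ofReal p) volume) →
      ∀ α : Fin d → ℕ, ∑ i, α i ≤ k →
        ∀ x, jb x ^ δ * ‖mderiv α f x‖ ≤ C * Hnorm d m p δ f := by
  have hkm : k ≤ m := by
    have : (0 : ℝ) ≤ d / p := by positivity
    exact_mod_cast (by linarith : (k : ℝ) ≤ m)
  have hl : d / (ENNReal.ofReal p).toReal < (m - k : ℕ) := by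
    rw [ENNReal.toReal_ofReal (by linarith), Nat.cast_sub hkm]
    linarith
  obtain ⟨C, hC, hsobolev⟩ := exists_ofReal_jb_rpow_mul_enorm_le_sum_eLpNorm_iteratedFDeriv (F := F)
    (ENNReal.one_le_ofReal.2 hp) δ hl
  set A := C * ∑ j ∈ Finset.range (m - k + 1), ENNReal.ofReal (d ^ j) with hA
  have hA_top : A ≠ ∞ :=
    ENNReal.mul_ne_top hC (ENNReal.sum_ne_top.2 fun _ _ ↦ ENNReal.ofReal_ne_top)
  refine ⟨A.toReal + 1, by positivity, fun f hf hLp α hα x ↦ ?_⟩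
  have hH := Hnorm_nonneg d m p δ f
  have hbound : ENNReal.ofReal (jb x ^ δ * ‖mderiv α f x‖) ≤
      ENNReal.ofReal (A.toReal * Hnorm d m p δ f) := by
    rw [ENNReal.ofReal_mul (Real.rpow_nonneg (jb_pos x).le δ), ofReal_norm,
      ENNReal.ofReal_mul ENNReal.toReal_nonneg, ENNReal.ofReal_toReal hA_top, hA, mul_assoc,
      Finset.sum_mul]
    refine (hsobolev _ (contDiff_mderiv (hf.of_le (by norm_cast; lia))) x).trans ?_
    gcongr with j hj
    exact eLpNorm_jb_rpow_smul_iteratedFDeriv_mderiv_le hp hf hLp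
      (by rw [Finset.mem_range] at hj; lia)
  calc _ ≤ A.toReal * Hnorm d m p δ f := (ENNReal.ofReal_le_ofReal_iff (by positivity)).1 hbound
    _ ≤ _ := by gcongr; linarith

/-- Weighted Sobolev embedding: for `m > d/p` and `k < m − d/p`,
`sup_x ⟨x⟩^δ |∂^α f(x)| ≤ C ‖f‖_{H^{m,p}_δ}` for all `|α| ≤ k`. -/
theorem stmt18 (d : ℕ) (hd : 1 ≤ d) (p : ℝ) (hp : 1 ≤ p) (m : ℕ) (δ : ℝ)
    (hm : (d : ℝ) / p < m) (k : ℕ) (hk : (k : ℝ) < (m : ℝ) - (d : ℝ) / p) :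
    ∃ C : ℝ, 0 < C ∧ ∀ f : EuclideanSpace ℝ (Fin d) → ℝ,
      ContDiff ℝ (⊤ : ℕ∞) f → HasCompactSupport f →
      ∀ α : Fin d → ℕ, (∑ i, α i) ≤ k →
        ∀ x, jb x ^ δ * |mderiv α f x| ≤ C * Hnorm d m p δ f := by
  obtain ⟨C, hC, hbound⟩ := stmt18_general (F := ℝ) d p hp m δ k hk
  exact ⟨C, hC, fun f hf hsupp ↦ hbound f (hf.of_le (by exact_mod_cast le_top)) fun _ ↦
    memLp_jb_rpow_smul_mderiv_of_hasCompactSupport (hf.of_le (by exact_mod_cast le_top)) hsupp δ _⟩
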